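/- arXiv:2305.06722 — 3 statements merged into one kernel-verified Lean document; each statement's English description precedes it below -/
import Mathlib

section
/- For every s > 0 there exists C > 0 such that the following holds. Let u : ℝ³ → ℂ be differentiable with ∇u ∈ L²(ℝ³) and ‖u‖_{L²} = 1, let α : ℝ³ → ℂ satisfy ‖α‖_{h_s} < ∞, and let V be the effective pair potential (the unique real V ∈ L² whose unnormalized Fourier transform equals v). Then the mean-field energy shift μ_{u,α} = (1/2)∫∫_{ℝ³×ℝ³} V(x−y)|u(y)|²|u(x)|² dy dx + Re ∫_{ℝ³} \overline{α(k)} f_u(k) dk + Re ∫_{ℝ³} \overline{α(k)} g_{u,α}(k) dk satisfies |μ_{u,α}| ≤ C ‖u‖_{H¹}² (1 + ‖α‖_{h_s})². -/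
open MeasureTheory
open scoped ENNReal

noncomputable section

/-- The dispersion relation `ω(k) = √(1+|k|²)` of the massive scalar field. -/
def ω (k : EuclideanSpace ℝ (Fin 3)) : ℝ := Real.sqrt (1 + ‖k‖ ^ 2)

/-- The Gross dressing form factor `B₀(k) = 1/(√(ω(k))·(|k|²+ω(k)))`. -/
def B0 (k : EuclideanSpace ℝ (Fin 3)) : ℝ := 1 / (Real.sqrt (ω k) * (‖k‖ ^ 2 + ω k))

/-- `v(k) = −4/(ω(k)(|k|²+ω(k))) + 2/(|k|²+ω(k))²`. -/
def vker (k : EuclideanSpace ℝ (Fin 3)) : ℝ :=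
  -4 / (ω k * (‖k‖ ^ 2 + ω k)) + 2 / (‖k‖ ^ 2 + ω k) ^ 2

/-- The square of the `H¹`-norm, `‖u‖_{H¹}² = ‖u‖_{L²}² + ‖∇u‖_{L²}²`. -/
def H1sq (u : EuclideanSpace ℝ (Fin 3) → ℂ) : ℝ :=
  (∫ x, ‖u x‖ ^ 2) + ∫ x, ‖fderiv ℝ u x‖ ^ 2

/-- The `H¹`-norm of `u`. -/
def H1norm (u : EuclideanSpace ℝ (Fin 3) → ℂ) : ℝ := Real.sqrt (H1sq u)

/-- The weighted norm `‖α‖_{h_s} = (∫ ω(k)^{2s}|α(k)|² dk)^{1/2}`. -/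
def hsNorm (s : ℝ) (α : EuclideanSpace ℝ (Fin 3) → ℂ) : ℝ :=
  Real.sqrt (∫ k, ω k ^ (2 * s) * ‖α k‖ ^ 2)

/-- The `j`-th partial derivative of `u`. -/
def pd (u : EuclideanSpace ℝ (Fin 3) → ℂ) (j : Fin 3) (x : EuclideanSpace ℝ (Fin 3)) : ℂ :=
  fderiv ℝ u x (EuclideanSpace.single j 1)

/-- `f_u(k) = 2 k B₀(k) · ∫ e^{−ik·x} \bar u(x)(−i∇u(x)) dx`. -/
def fu (u : EuclideanSpace ℝ (Fin 3) → ℂ) (k : EuclideanSpace ℝ (Fin 3)) : ℂ :=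
  ((2 * B0 k : ℝ) : ℂ) * ∑ j : Fin 3, ((k j : ℝ) : ℂ) *
    ∫ x, Complex.exp (-(Complex.I * ((inner ℝ k x : ℝ) : ℂ))) *
      (starRingEnd ℂ) (u x) * (-Complex.I * pd u j x)

/-- The `j`-th component of `F_α(x) = 2 Re ∫ k B₀(k) e^{ik·x} α(k) dk`. -/
def Fα (α : EuclideanSpace ℝ (Fin 3) → ℂ) (j : Fin 3) (x : EuclideanSpace ℝ (Fin 3)) : ℝ :=
  2 * (∫ k, ((k j * B0 k : ℝ) : ℂ) *
    Complex.exp (Complex.I * ((inner ℝ k x : ℝ) : ℂ)) * α k).re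

/-- `g_{u,α}(k) = 2 k B₀(k) · ∫ e^{−ik·x} F_α(x) |u(x)|² dx`. -/
def gualpha (u α : EuclideanSpace ℝ (Fin 3) → ℂ) (k : EuclideanSpace ℝ (Fin 3)) : ℂ :=
  ((2 * B0 k : ℝ) : ℂ) * ∑ j : Fin 3, ((k j : ℝ) : ℂ) *
    ∫ x, Complex.exp (-(Complex.I * ((inner ℝ k x : ℝ) : ℂ))) *
      ((Fα α j x : ℝ) : ℂ) * ((‖u x‖ ^ 2 : ℝ) : ℂ)

/-- The mean-field energy shift
`μ_{u,α} = ½∬ V(x−y)|u(y)|²|u(x)|² + Re⟨α, f_u⟩ + Re⟨α, g_{u,α}⟩`. -/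
def μshift (V : EuclideanSpace ℝ (Fin 3) → ℝ) (u α : EuclideanSpace ℝ (Fin 3) → ℂ) : ℝ :=
  (1 / 2) * (∫ x, ∫ y, V (x - y) * ‖u y‖ ^ 2 * ‖u x‖ ^ 2) +
    (∫ k, (starRingEnd ℂ) (α k) * fu u k).re +
    (∫ k, (starRingEnd ℂ) (α k) * gualpha u α k).re

abbrev E3 := EuclideanSpace ℝ (Fin 3)

lemma line_bound (g : ℝ → ℝ) (hg : Differentiable ℝ g) (t : ℝ) :
    ‖g t‖ₑ ≤ ∫⁻ s, (‖g s‖ₑ + ‖deriv g s‖ₑ) := by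
  by_cases h : ∫⁻ s, (‖g s‖ₑ + ‖deriv g s‖ₑ) = ⊤
  · rw [h]; exact le_top
  have hm : Measurable (deriv g) := measurable_deriv g
  have hgm : Measurable g := hg.continuous.measurable
  rw [lintegral_add_left (by fun_prop)] at h ⊢
  obtain ⟨h1, h2⟩ := ENNReal.add_ne_top.mp h
  have i1 : Integrable g := ⟨hgm.aestronglyMeasurable, lt_top_iff_ne_top.mpr h1⟩
  have i2 : Integrable (deriv g) := ⟨hm.aestronglyMeasurable, lt_top_iff_ne_top.mpr h2⟩
  have hd : ∀ x ∈ Set.Iic t, HasDerivAt g (deriv g x) x := fun x _ => (hg x).hasDerivAt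
  have l := tendsto_zero_of_hasDerivAt_of_integrableOn_Iic hd i2.integrableOn i1.integrableOn
  have e := integral_Iic_of_hasDerivAt_of_tendsto' hd i2.integrableOn l
  rw [sub_zero] at e
  rw [← e]
  calc _ ≤ ∫⁻ s in Set.Iic t, ‖deriv g s‖ₑ := enorm_integral_le_lintegral_enorm _
    _ ≤ ∫⁻ s, ‖deriv g s‖ₑ := setLIntegral_le_lintegral _ _
    _ ≤ _ := le_add_self

lemma gns1 (v : E3 → ℝ) (hv : Differentiable ℝ v) (F : E3 → ℝ≥0∞) (hF : Measurable F)
    (hvF : ∀ x, ‖v x‖ₑ + ‖fderiv ℝ v x‖ₑ ≤ F x) :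
    ∫⁻ x, ‖v x‖ₑ ^ (3 / 2 : ℝ) ≤ (∫⁻ x, F x) ^ (3 / 2 : ℝ) := by
  have mp := PiLp.volume_preserving_toLp (Fin 3)
  have me : Measurable (@WithLp.toLp 2 (Fin 3 → ℝ)) := mp.measurable
  rw [← mp.lintegral_comp hF, ← mp.lintegral_comp
    (f := fun x => ‖v x‖ₑ ^ (3 / 2 : ℝ)) (by have := hv.continuous.measurable; fun_prop)]
  have hp : Real.HolderConjugate (Fintype.card (Fin 3)) (3 / 2 : ℝ) := by
    rw [Real.holderConjugate_iff]; norm_num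
  have key := lintegral_prod_lintegral_pow_le (fun _ : Fin 3 => (volume : Measure ℝ)) hp
    (f := fun x => F (WithLp.toLp 2 x)) (by fun_prop)
  refine le_trans ?_ key
  rw [volume_pi]
  apply lintegral_mono
  intro x
  have e : ‖v (WithLp.toLp 2 x)‖ₑ ^ (3 / 2 : ℝ) =
      ∏ i : Fin 3, ‖v (WithLp.toLp 2 x)‖ₑ ^ ((1 : ℝ) / ((Fintype.card (Fin 3) : ℝ) - 1)) := by
    rw [Finset.prod_const, ← ENNReal.rpow_mul_natCast]
    norm_num
  simp only
  rw [e]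
  refine Finset.prod_le_prod' fun i _ => ?_
  refine ENNReal.rpow_le_rpow ?_ (by norm_num)
  have hc : ∀ t : ℝ, HasDerivAt (fun t : ℝ => (WithLp.toLp 2 (Function.update x i t) : E3))
      (EuclideanSpace.single i 1) t := by
    intro t
    have h1 : (fun t : ℝ => (WithLp.toLp 2 (Function.update x i t) : E3)) =
        fun t => (WithLp.toLp 2 (Function.update x i 0) : E3) + t • EuclideanSpace.single i (1 : ℝ) := by
      funext t
      ext j
      by_cases hj : j = i
      · subst hj; simp
      · simp [hj]
    rw [h1]
    simpa using ((hasDerivAt_id t).smul_const (EuclideanSpace.single i (1 : ℝ))).const_add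
      (WithLp.toLp 2 (Function.update x i 0) : E3)
  have hg : ∀ t, HasDerivAt (fun t : ℝ => v (WithLp.toLp 2 (Function.update x i t)))
      (fderiv ℝ v (WithLp.toLp 2 (Function.update x i t)) (EuclideanSpace.single i 1)) t :=
    fun t => (hv _).hasFDerivAt.comp_hasDerivAt t (hc t)
  have lb := line_bound _ (fun t => (hg t).differentiableAt) (x i)
  simp only [Function.update_eq_self] at lb
  refine lb.trans (lintegral_mono fun t => ?_)
  refine le_trans ?_ (hvF _)
  gcongr
  rw [(hg t).deriv]
  refine (ContinuousLinearMap.le_opENorm _ _).trans ?_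
  simp [enorm_eq_nnnorm]

lemma absorb {X K : ℝ≥0∞} (hX : X ≠ ⊤) (hK : K ≠ ⊤)
    (h : X ≤ (X ^ (1 / 2 : ℝ) * K ^ (1 / 2 : ℝ)) ^ (3 / 2 : ℝ)) : X ≤ K ^ 3 := by
  lift X to NNReal using hX
  lift K to NNReal using hK
  rw [← ENNReal.mul_rpow_of_nonneg _ _ (by norm_num), ← ENNReal.rpow_mul] at h
  have h4 : (X : ℝ≥0∞) ^ 4 ≤ (X * K : ℝ≥0∞) ^ 3 := by
    calc (X : ℝ≥0∞) ^ 4 ≤ ((X * K : ℝ≥0∞) ^ (1 / 2 * (3 / 2) : ℝ)) ^ 4 := by gcongr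
      _ = _ := by
        rw [← ENNReal.rpow_mul_natCast, ← ENNReal.rpow_natCast]; norm_num
  norm_cast at h4 ⊢
  by_cases h0 : X = 0
  · simp [h0]
  have : X ^ 3 * X ≤ X ^ 3 * K ^ 3 := by rw [← pow_succ, ← mul_pow]; exact h4
  exact le_of_mul_le_mul_left this (by positivity)

lemma sob_eps (u : E3 → ℂ) (hu : Differentiable ℝ u) (hu2 : MemLp u 2 volume)
    (hd2 : MemLp (fun x => fderiv ℝ u x) 2 volume) (ε : ℝ) (hε : 0 < ε) :
    ∫⁻ x, ENNReal.ofReal ((‖u x‖ ^ 2 / (1 + ε * ‖u x‖ ^ 2)) ^ 3) ≤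
      (ENNReal.ofReal (32 * H1sq u)) ^ 3 := by
  have mu : Measurable u := hu.continuous.measurable
  have md : Measurable (fun x => fderiv ℝ u x) := measurable_fderiv ℝ u
  have iu : Integrable (fun x => ‖u x‖ ^ 2) := (memLp_two_iff_integrable_sq_norm hu2.1).1 hu2
  have id : Integrable (fun x => ‖fderiv ℝ u x‖ ^ 2) :=
    (memLp_two_iff_integrable_sq_norm hd2.1).1 hd2
  set r : E3 → ℝ := fun x => ‖u x‖ ^ 2 / (1 + ε * ‖u x‖ ^ 2) with hr
  set h : E3 → ℝ := fun x => Real.sqrt (32 * (‖u x‖ ^ 2 + ‖fderiv ℝ u x‖ ^ 2)) with hh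
  have r0 : ∀ x, 0 ≤ r x := fun x => by positivity
  have mr : Measurable r := by fun_prop
  have mh : Measurable h := by fun_prop
  have hr1 : ∀ x, r x ≤ ‖u x‖ ^ 2 := fun x => div_le_self (by positivity) (by
    have : 0 ≤ ε * ‖u x‖ ^ 2 := by positivity
    linarith)
  have hr2 : ∀ x, r x ≤ ε⁻¹ := fun x => by
    rw [hr]; simp only
    rw [div_le_iff₀ (by positivity)]
    have : ε⁻¹ * (1 + ε * ‖u x‖ ^ 2) = ε⁻¹ + ‖u x‖ ^ 2 := by field_simp
    rw [this]
    have : 0 < ε⁻¹ := by positivity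
    linarith
  have hsq : ∀ x, Real.sqrt (r x) * (1 + ε * ‖u x‖ ^ 2) ≥ ‖u x‖ := by
    intro x
    have h1 : (1:ℝ) ≤ 1 + ε * ‖u x‖ ^ 2 := by
      have : 0 ≤ ε * ‖u x‖ ^ 2 := by positivity
      linarith
    refine (pow_le_pow_iff_left₀ (norm_nonneg _) (by positivity) two_ne_zero).1 ?_
    rw [mul_pow, Real.sq_sqrt (r0 x), hr]; simp only
    have : ‖u x‖ ^ 2 / (1 + ε * ‖u x‖ ^ 2) * (1 + ε * ‖u x‖ ^ 2) ^ 2 =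
      ‖u x‖ ^ 2 * (1 + ε * ‖u x‖ ^ 2) := by field_simp
    rw [this]
    exact le_mul_of_one_le_right (by positivity) h1
  -- derivative
  have hder : ∀ x, ∃ L : E3 →L[ℝ] ℝ, HasFDerivAt (fun x => r x ^ 2) L x ∧
      ‖L‖ ≤ 4 * (r x * Real.sqrt (r x)) * ‖fderiv ℝ u x‖ := by
    intro x
    have d1 : HasFDerivAt (fun x => ‖u x‖ ^ 2)
        (2 • (innerSL ℝ (u x)).comp (fderiv ℝ u x)) x := (hu x).hasFDerivAt.norm_sq
    have hpos : 0 < 1 + ε * ‖u x‖ ^ 2 := by positivity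
    have d2 : HasDerivAt (fun y : ℝ => (y / (1 + ε * y)) ^ 2)
        (2 * r x * (1 / (1 + ε * ‖u x‖ ^ 2) ^ 2)) (‖u x‖ ^ 2) := by
      have a := (hasDerivAt_id (‖u x‖ ^ 2)).div
        (((hasDerivAt_id (‖u x‖ ^ 2)).const_mul ε).const_add 1) hpos.ne'
      have b := a.pow 2
      refine HasDerivAt.congr_deriv b ?_
      simp only [hr, id_eq, Pi.div_apply, Nat.cast_ofNat, Nat.reduceSub, pow_one]
      field_simp
      ring
    refine ⟨_, HasDerivAt.comp_hasFDerivAt (f := fun x => ‖u x‖ ^ 2) x d2 d1, ?_⟩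
    rw [norm_smul, Real.norm_of_nonneg (by have := r0 x; positivity)]
    have n1 : ‖(2 • (innerSL ℝ (u x)).comp (fderiv ℝ u x) : E3 →L[ℝ] ℝ)‖ ≤
        2 * (‖u x‖ * ‖fderiv ℝ u x‖) := by
      refine (norm_nsmul_le).trans ?_
      simp only [Nat.cast_ofNat]
      gcongr
      refine (ContinuousLinearMap.opNorm_comp_le _ _).trans ?_
      rw [innerSL_apply_norm]
    have n2 : (1 / (1 + ε * ‖u x‖ ^ 2) ^ 2) * ‖u x‖ ≤ Real.sqrt (r x) := by
      rw [one_div, inv_mul_le_iff₀ (by positivity)]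
      have := hsq x
      have h1 : (1:ℝ) ≤ 1 + ε * ‖u x‖ ^ 2 := by
        have : 0 ≤ ε * ‖u x‖ ^ 2 := by positivity
        linarith
      calc ‖u x‖ ≤ Real.sqrt (r x) * (1 + ε * ‖u x‖ ^ 2) := this
        _ ≤ Real.sqrt (r x) * (1 + ε * ‖u x‖ ^ 2) ^ 2 := by
          gcongr; nlinarith
        _ = _ := by ring
    calc _ ≤ 2 * r x * (1 / (1 + ε * ‖u x‖ ^ 2) ^ 2) * (2 * (‖u x‖ * ‖fderiv ℝ u x‖)) := by
          have := r0 x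
          gcongr
      _ = 4 * r x * ((1 / (1 + ε * ‖u x‖ ^ 2) ^ 2) * ‖u x‖) * ‖fderiv ℝ u x‖ := by ring
      _ ≤ 4 * r x * Real.sqrt (r x) * ‖fderiv ℝ u x‖ := by
          have := r0 x
          gcongr
      _ = _ := by ring
  have g := gns1 (fun x => r x ^ 2) (fun x => by
      obtain ⟨L, hL, _⟩ := hder x; exact hL.differentiableAt)
    (fun x => ENNReal.ofReal (r x * Real.sqrt (r x)) * ENNReal.ofReal (h x)) (by fun_prop) (by
      intro x
      obtain ⟨L, hL, hn⟩ := hder x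
      rw [hL.fderiv, ← ofReal_norm, ← ofReal_norm, ← ENNReal.ofReal_add (by positivity)
        (by positivity), ← ENNReal.ofReal_mul (by have := r0 x; positivity)]
      apply ENNReal.ofReal_le_ofReal
      rw [Real.norm_of_nonneg (by positivity)]
      have hs : Real.sqrt (r x) ≤ ‖u x‖ := by
        rw [Real.sqrt_le_left (by positivity)]; exact hr1 x
      have s2 : Real.sqrt (r x) ^ 2 = r x := Real.sq_sqrt (r0 x)
      have hle : ‖u x‖ + 4 * ‖fderiv ℝ u x‖ ≤ h x := by
        apply Real.le_sqrt_of_sq_le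
        nlinarith [sq_nonneg (‖u x‖ - 4 * ‖fderiv ℝ u x‖), sq_nonneg (‖u x‖)]
      calc r x ^ 2 + ‖L‖ ≤ r x * Real.sqrt (r x) * Real.sqrt (r x) +
            4 * (r x * Real.sqrt (r x)) * ‖fderiv ℝ u x‖ := by
            rw [mul_assoc, ← sq (Real.sqrt _), s2, ← sq]; gcongr
        _ ≤ r x * Real.sqrt (r x) * ‖u x‖ + 4 * (r x * Real.sqrt (r x)) * ‖fderiv ℝ u x‖ := by
            have := r0 x
            gcongr
        _ = r x * Real.sqrt (r x) * (‖u x‖ + 4 * ‖fderiv ℝ u x‖) := by ring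
        _ ≤ _ := by
            have := r0 x
            gcongr)
  have eX : (∫⁻ x, ‖r x ^ 2‖ₑ ^ (3 / 2 : ℝ)) = ∫⁻ x, ENNReal.ofReal (r x ^ 3) := by
    apply lintegral_congr
    intro x
    rw [← ofReal_norm, Real.norm_of_nonneg (by positivity),
      ENNReal.ofReal_rpow_of_nonneg (by positivity) (by norm_num)]
    congr 1
    rw [← Real.rpow_natCast, ← Real.rpow_mul (r0 x), ← Real.rpow_natCast]
    norm_num
  rw [eX] at g
  have hol := ENNReal.lintegral_mul_le_Lp_mul_Lq volume Real.HolderConjugate.two_two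
    (f := fun x => ENNReal.ofReal (r x * Real.sqrt (r x))) (g := fun x => ENNReal.ofReal (h x))
    (by fun_prop) (by fun_prop)
  have e1 : (∫⁻ x, ENNReal.ofReal (r x * Real.sqrt (r x)) ^ (2 : ℝ)) =
      ∫⁻ x, ENNReal.ofReal (r x ^ 3) := by
    apply lintegral_congr
    intro x
    rw [show (2:ℝ) = ((2:ℕ):ℝ) by norm_num, ENNReal.rpow_natCast,
      ← ENNReal.ofReal_pow (by have := r0 x; positivity), mul_pow, Real.sq_sqrt (r0 x)]
    congr 1
  have e2 : (∫⁻ x, ENNReal.ofReal (h x) ^ (2 : ℝ)) = ENNReal.ofReal (32 * H1sq u) := by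
    rw [H1sq, ← integral_add iu id, ← integral_const_mul,
      ofReal_integral_eq_lintegral_ofReal
        (f := fun x => 32 * (‖u x‖ ^ 2 + ‖fderiv ℝ u x‖ ^ 2)) ((iu.add id).const_mul 32)
        (Filter.Eventually.of_forall fun x => by simp only [Pi.zero_apply]; positivity)]
    apply lintegral_congr
    intro x
    rw [show (2:ℝ) = ((2:ℕ):ℝ) by norm_num, ENNReal.rpow_natCast,
      ← ENNReal.ofReal_pow (by positivity), Real.sq_sqrt (by positivity)]
  rw [e1, e2] at hol
  apply absorb
  · have : ∫⁻ x, ENNReal.ofReal (r x ^ 3) ≤ ∫⁻ x, ENNReal.ofReal (ε⁻¹ ^ 2 * ‖u x‖ ^ 2) := by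
      apply lintegral_mono
      intro x
      apply ENNReal.ofReal_le_ofReal
      rw [pow_succ]
      have := r0 x
      have := hr1 x
      have := hr2 x
      gcongr
    exact (this.trans_lt (iu.const_mul _).lintegral_lt_top).ne
  · exact ENNReal.ofReal_ne_top
  · refine g.trans ?_
    gcongr
    exact hol

lemma sob (u : E3 → ℂ) (hu : Differentiable ℝ u) (hu2 : MemLp u 2 volume)
    (hd2 : MemLp (fun x => fderiv ℝ u x) 2 volume) :
    ∫⁻ x, ENNReal.ofReal (‖u x‖ ^ 6) ≤ (ENNReal.ofReal (32 * H1sq u)) ^ 3 := by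
  have mu : Measurable u := hu.continuous.measurable
  have key : ∀ x, Filter.Tendsto (fun n : ℕ =>
      ENNReal.ofReal ((‖u x‖ ^ 2 / (1 + (1 / ((n:ℝ) + 1)) * ‖u x‖ ^ 2)) ^ 3)) Filter.atTop
      (nhds (ENNReal.ofReal (‖u x‖ ^ 6))) := by
    intro x
    apply ENNReal.tendsto_ofReal
    have t := tendsto_one_div_add_atTop_nhds_zero_nat (𝕜 := ℝ)
    have := ((tendsto_const_nhds (x := ‖u x‖ ^ 2)).div
      ((t.mul_const (‖u x‖ ^ 2)).const_add 1) (by norm_num)).pow 3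
    have e : (‖u x‖ ^ 2 / (1 + 0 * ‖u x‖ ^ 2)) ^ 3 = ‖u x‖ ^ 6 := by
      rw [zero_mul, add_zero, div_one]; ring
    rw [e] at this
    exact this
  calc ∫⁻ x, ENNReal.ofReal (‖u x‖ ^ 6) = ∫⁻ x, Filter.liminf (fun n : ℕ =>
      ENNReal.ofReal ((‖u x‖ ^ 2 / (1 + (1 / ((n:ℝ) + 1)) * ‖u x‖ ^ 2)) ^ 3)) Filter.atTop :=
        lintegral_congr fun x => (key x).liminf_eq.symm
    _ ≤ Filter.liminf (fun n : ℕ => ∫⁻ x,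
      ENNReal.ofReal ((‖u x‖ ^ 2 / (1 + (1 / ((n:ℝ) + 1)) * ‖u x‖ ^ 2)) ^ 3)) Filter.atTop :=
        lintegral_liminf_le (fun n => by fun_prop)
    _ ≤ _ := by
        refine Filter.liminf_le_of_le (by isBoundedDefault) ?_
        intro b hb
        obtain ⟨n, hn⟩ := hb.exists
        exact hn.trans (sob_eps u hu hu2 hd2 _ (by positivity))

lemma omega_ge_one (k : E3) : 1 ≤ ω k := by
  rw [ω, Real.one_le_sqrt]; nlinarith [sq_nonneg ‖k‖]

lemma omega_sq (k : E3) : ω k ^ 2 = 1 + ‖k‖ ^ 2 := Real.sq_sqrt (by positivity)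

lemma B0_nonneg (k : E3) : 0 ≤ B0 k := by
  have := omega_ge_one k
  unfold B0; positivity

lemma w_sq_le (k : E3) : (‖k‖ * B0 k) ^ 2 ≤ (ω k ^ 3)⁻¹ := by
  have h1 := omega_ge_one k
  have h2 := omega_sq k
  have h3 : ω k ^ 2 ≤ ‖k‖ ^ 2 + ω k := by linarith
  have h4 : ‖k‖ ^ 2 ≤ ω k ^ 2 := by linarith
  have e : (‖k‖ * B0 k) ^ 2 = ‖k‖ ^ 2 / (ω k * (‖k‖ ^ 2 + ω k) ^ 2) := by
    rw [B0, mul_pow, div_pow, mul_pow, Real.sq_sqrt (by linarith)]; ring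
  rw [e]
  calc ‖k‖ ^ 2 / (ω k * (‖k‖ ^ 2 + ω k) ^ 2) ≤ ω k ^ 2 / (ω k * (ω k ^ 2) ^ 2) := by gcongr
    _ = _ := by field_simp

lemma w_weight (s : ℝ) (k : E3) :
    (‖k‖ * B0 k) ^ 2 / ω k ^ (2 * s) ≤ (1 + ‖k‖ ^ 2) ^ (-(3 + 2 * s) / 2) := by
  have h1 := omega_ge_one k
  have h0 : 0 < ω k := by linarith
  have e : (1 + ‖k‖ ^ 2) ^ (-(3 + 2 * s) / 2) = (ω k ^ 3)⁻¹ / ω k ^ (2 * s) := by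
    rw [← omega_sq, ← Real.rpow_natCast, ← Real.rpow_mul h0.le, ← Real.rpow_natCast,
      ← Real.rpow_neg h0.le, ← Real.rpow_sub h0]
    congr 1; push_cast; ring
  rw [e]
  gcongr
  exact w_sq_le k

lemma M_bound (s : ℝ) (hs : 0 < s) (α : E3 → ℂ) (hm : Measurable α)
    (hfin : ∫⁻ k, ENNReal.ofReal (ω k ^ (2 * s) * ‖α k‖ ^ 2) < ⊤) :
    Integrable (fun k => ‖k‖ * B0 k * ‖α k‖) ∧
    ∫ k, ‖k‖ * B0 k * ‖α k‖ ≤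
      (((∫ k : E3, (1 + ‖k‖ ^ 2) ^ (-(3 + 2 * s) / 2)) + 1) / 2) * (1 + hsNorm s α) := by
  have mω : Measurable ω := by unfold ω; fun_prop
  have mB : Measurable B0 := by unfold B0; fun_prop
  have iα : Integrable (fun k => ω k ^ (2 * s) * ‖α k‖ ^ 2) := by
    refine ⟨by fun_prop, ?_⟩
    rw [hasFiniteIntegral_iff_ofReal (Filter.Eventually.of_forall fun k => by
      have := omega_ge_one k
      simp only [Pi.zero_apply]; positivity)]
    exact hfin
  have iJ : Integrable (fun k : E3 => (1 + ‖k‖ ^ 2) ^ (-(3 + 2 * s) / 2)) :=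
    integrable_rpow_neg_one_add_norm_sq (by simp; linarith)
  set a := hsNorm s α with ha
  have a0 : 0 ≤ a := Real.sqrt_nonneg _
  have a2 : a ^ 2 = ∫ k, ω k ^ (2 * s) * ‖α k‖ ^ 2 := Real.sq_sqrt (integral_nonneg fun k => by
    have := omega_ge_one k
    positivity)
  set J := ∫ k : E3, (1 + ‖k‖ ^ 2) ^ (-(3 + 2 * s) / 2) with hJ
  have J0 : 0 ≤ J := integral_nonneg fun k => by positivity
  have pw : ∀ k, ‖k‖ * B0 k * ‖α k‖ ≤ (1 + a) / 2 * (1 + ‖k‖ ^ 2) ^ (-(3 + 2 * s) / 2) +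
      1 / (2 * (1 + a)) * (ω k ^ (2 * s) * ‖α k‖ ^ 2) := by
    intro k
    have hp : 0 < ω k ^ (2 * s) := Real.rpow_pos_of_pos (by linarith [omega_ge_one k]) _
    refine le_trans ?_ (add_le_add_left (mul_le_mul_of_nonneg_left (w_weight s k)
      (by positivity : 0 ≤ (1 + a) / 2)) _)
    generalize ω k ^ (2 * s) = p at *
    generalize ‖k‖ * B0 k = w
    generalize ‖α k‖ = z
    have : (1 + a) / 2 * (w ^ 2 / p) + 1 / (2 * (1 + a)) * (p * z ^ 2) - w * z =
        ((1 + a) * w - p * z) ^ 2 / (2 * p * (1 + a)) := by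
      field_simp; ring
    have h2 : 0 ≤ ((1 + a) * w - p * z) ^ 2 / (2 * p * (1 + a)) := by positivity
    linarith
  have iG := (iJ.const_mul ((1 + a) / 2)).add (iα.const_mul (1 / (2 * (1 + a))))
  have iI : Integrable (fun k => ‖k‖ * B0 k * ‖α k‖) := by
    refine iG.mono' (by fun_prop) (Filter.Eventually.of_forall fun k => ?_)
    rw [Real.norm_of_nonneg (by have := B0_nonneg k; positivity)]
    exact pw k
  refine ⟨iI, ?_⟩
  have := integral_mono iI iG pw
  simp only [Pi.add_apply] at this
  rw [integral_add (iJ.const_mul ((1 + a) / 2)) (iα.const_mul (1 / (2 * (1 + a)))),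
    integral_const_mul, integral_const_mul, ← hJ, ← a2] at this
  refine this.trans ?_
  have h3 : 1 / (2 * (1 + a)) * a ^ 2 ≤ (1 + a) / 2 := by
    rw [one_div, inv_mul_le_iff₀ (by positivity)]; nlinarith
  nlinarith

lemma norm_exp_neg_I (r : ℝ) : ‖Complex.exp (-(Complex.I * (r : ℂ)))‖ = 1 := by
  rw [Complex.norm_exp]; simp

lemma norm_exp_I (r : ℝ) : ‖Complex.exp (Complex.I * (r : ℂ))‖ = 1 := by
  rw [Complex.norm_exp]; simp

lemma kB_sum (k : E3) (I : Fin 3 → ℂ) (D : ℝ) (hI : ∀ j, ‖I j‖ ≤ D) :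
    ‖((2 * B0 k : ℝ) : ℂ) * ∑ j : Fin 3, ((k j : ℝ) : ℂ) * I j‖ ≤ 6 * D * (‖k‖ * B0 k) := by
  have hB := B0_nonneg k
  rw [norm_mul, Complex.norm_of_nonneg (by positivity)]
  have : ‖∑ j : Fin 3, ((k j : ℝ) : ℂ) * I j‖ ≤ ∑ j : Fin 3, ‖k‖ * D := by
    refine norm_sum_le_of_le _ fun j _ => ?_
    rw [norm_mul, Complex.norm_real]
    have := PiLp.norm_apply_le k j
    have := hI j
    gcongr
  simp at this
  calc _ ≤ 2 * B0 k * (3 * (‖k‖ * D)) := by gcongr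
    _ = _ := by ring

lemma fu_bound (u : E3 → ℂ) (hu2 : MemLp u 2 volume)
    (hd2 : MemLp (fun x => fderiv ℝ u x) 2 volume) (k : E3) :
    ‖fu u k‖ ≤ 6 * (H1sq u / 2) * (‖k‖ * B0 k) := by
  have iu : Integrable (fun x => ‖u x‖ ^ 2) := (memLp_two_iff_integrable_sq_norm hu2.1).1 hu2
  have id : Integrable (fun x => ‖fderiv ℝ u x‖ ^ 2) :=
    (memLp_two_iff_integrable_sq_norm hd2.1).1 hd2
  apply kB_sum
  intro j
  refine (norm_integral_le_of_norm_le (g := fun x => (‖u x‖ ^ 2 + ‖fderiv ℝ u x‖ ^ 2) / 2)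
    ((iu.add id).div_const 2) (Filter.Eventually.of_forall fun x => ?_)).trans ?_
  · rw [norm_mul, norm_mul, norm_exp_neg_I, RCLike.norm_conj, norm_mul, norm_neg, Complex.norm_I]
    have : ‖pd u j x‖ ≤ ‖fderiv ℝ u x‖ := by
      refine ((fderiv ℝ u x).le_opNorm _).trans ?_
      simp
    nlinarith [sq_nonneg (‖u x‖ - ‖fderiv ℝ u x‖), norm_nonneg (u x),
      mul_le_mul_of_nonneg_left this (norm_nonneg (u x))]
  · rw [integral_div, integral_add iu id, H1sq]

lemma Fα_bound (α : E3 → ℂ) (iM : Integrable (fun k => ‖k‖ * B0 k * ‖α k‖)) (j : Fin 3) (x : E3) :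
    |Fα α j x| ≤ 2 * ∫ k, ‖k‖ * B0 k * ‖α k‖ := by
  rw [Fα, abs_mul, abs_two]
  gcongr
  refine (Complex.abs_re_le_norm _).trans ?_
  refine norm_integral_le_of_norm_le iM (Filter.Eventually.of_forall fun k => ?_)
  rw [norm_mul, norm_mul, norm_exp_I, Complex.norm_real, norm_mul, mul_one,
    Real.norm_of_nonneg (B0_nonneg k)]
  have := PiLp.norm_apply_le k j
  have := B0_nonneg k
  gcongr

lemma g_bound (u α : E3 → ℂ) (hu2 : MemLp u 2 volume) (h1 : ∫ x, ‖u x‖ ^ 2 = 1)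
    (iM : Integrable (fun k => ‖k‖ * B0 k * ‖α k‖)) (k : E3) :
    ‖gualpha u α k‖ ≤ 6 * (2 * ∫ k, ‖k‖ * B0 k * ‖α k‖) * (‖k‖ * B0 k) := by
  have iu : Integrable (fun x => ‖u x‖ ^ 2) := (memLp_two_iff_integrable_sq_norm hu2.1).1 hu2
  apply kB_sum
  intro j
  refine (norm_integral_le_of_norm_le (iu.const_mul (2 * ∫ k, ‖k‖ * B0 k * ‖α k‖))
    (Filter.Eventually.of_forall fun x => ?_)).trans ?_
  · rw [norm_mul, norm_mul, norm_exp_neg_I, Complex.norm_real, Complex.norm_real, one_mul,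
      Real.norm_of_nonneg (by positivity : 0 ≤ ‖u x‖ ^ 2)]
    have := Fα_bound α iM j x
    gcongr
    exact this
  · rw [integral_const_mul, h1, mul_one]

lemma pair_bound (α f : E3 → ℂ) (iM : Integrable (fun k => ‖k‖ * B0 k * ‖α k‖)) (D : ℝ)
    (hf : ∀ k, ‖f k‖ ≤ 6 * D * (‖k‖ * B0 k)) :
    |(∫ k, (starRingEnd ℂ) (α k) * f k).re| ≤ 6 * D * ∫ k, ‖k‖ * B0 k * ‖α k‖ := by
  refine (Complex.abs_re_le_norm _).trans ?_
  rw [← integral_const_mul]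
  refine norm_integral_le_of_norm_le (iM.const_mul _) (Filter.Eventually.of_forall fun k => ?_)
  rw [norm_mul, RCLike.norm_conj]
  calc _ ≤ ‖α k‖ * (6 * D * (‖k‖ * B0 k)) := by gcongr; exact hf k
    _ = _ := by ring

lemma V_bound (V : E3 → ℝ) (hV : MemLp V 2 volume) (u : E3 → ℂ) (hu : Differentiable ℝ u)
    (hu2 : MemLp u 2 volume)
    (hd2 : MemLp (fun x => fderiv ℝ u x) 2 volume) (h1 : ∫ x, ‖u x‖ ^ 2 = 1) (hH : 1 ≤ H1sq u) :
    |∫ x, ∫ y, V (x - y) * ‖u y‖ ^ 2 * ‖u x‖ ^ 2| ≤ 32 * H1sq u * ((∫ x, V x ^ 2) + 1) := by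
  have mu : Measurable u := hu.continuous.measurable
  have iu : Integrable (fun x => ‖u x‖ ^ 2) := (memLp_two_iff_integrable_sq_norm hu2.1).1 hu2
  have iV : Integrable (fun x => V x ^ 2) := hV.integrable_sq
  have S := sob u hu hu2 hd2
  set K := 32 * H1sq u with hK
  have K1 : 1 ≤ K := by linarith
  have K0 : 0 < K := by linarith
  have i6 : Integrable (fun x => ‖u x‖ ^ 6) := by
    refine ⟨by fun_prop, ?_⟩
    rw [hasFiniteIntegral_iff_ofReal (Filter.Eventually.of_forall fun k => by
      simp only [Pi.zero_apply]; positivity)]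
    exact S.trans_lt (ENNReal.pow_lt_top ENNReal.ofReal_lt_top)
  have b6 : ∫ x, ‖u x‖ ^ 6 ≤ K ^ 3 := by
    rw [← ENNReal.ofReal_le_ofReal_iff (by positivity),
      ofReal_integral_eq_lintegral_ofReal i6 (Filter.Eventually.of_forall fun k => by
      simp only [Pi.zero_apply]; positivity), ENNReal.ofReal_pow K0.le]
    exact S
  have p4 : ∀ x, ‖u x‖ ^ 4 ≤ K * ‖u x‖ ^ 2 + K⁻¹ * ‖u x‖ ^ 6 := by
    intro x
    have e : K * ‖u x‖ ^ 2 + K⁻¹ * ‖u x‖ ^ 6 - ‖u x‖ ^ 4 =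
      K⁻¹ * (((K - ‖u x‖ ^ 2) ^ 2 + K * ‖u x‖ ^ 2) * ‖u x‖ ^ 2) := by field_simp; ring
    have : 0 ≤ K⁻¹ * (((K - ‖u x‖ ^ 2) ^ 2 + K * ‖u x‖ ^ 2) * ‖u x‖ ^ 2) := by positivity
    linarith
  have iR := (iu.const_mul K).add (i6.const_mul K⁻¹)
  have i4 : Integrable (fun x => ‖u x‖ ^ 4) := by
    refine iR.mono' (by fun_prop) (Filter.Eventually.of_forall fun x => ?_)
    rw [Real.norm_of_nonneg (by positivity)]
    exact p4 x
  have b4 : ∫ x, ‖u x‖ ^ 4 ≤ K + K ^ 2 := by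
    have := integral_mono i4 iR p4
    simp only [Pi.add_apply] at this
    rw [integral_add (iu.const_mul K) (i6.const_mul K⁻¹), integral_const_mul, integral_const_mul,
      h1, mul_one] at this
    have h2 : K⁻¹ * ∫ x, ‖u x‖ ^ 6 ≤ K ^ 2 := by
      rw [inv_mul_le_iff₀ K0]; calc _ ≤ K ^ 3 := b6
        _ = _ := by ring
    linarith
  set N := ∫ x, V x ^ 2 with hN
  have N0 : 0 ≤ N := integral_nonneg fun x => by positivity
  have inner : ∀ x, ‖∫ y, V (x - y) * ‖u y‖ ^ 2 * ‖u x‖ ^ 2‖ ≤ K * (N + 1) * ‖u x‖ ^ 2 := by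
    intro x
    have iVx : Integrable (fun y => V (x - y) ^ 2) := iV.comp_sub_left x
    have ig := ((iVx.const_mul (K / 2)).add (i4.const_mul (1 / (2 * K)))).mul_const (‖u x‖ ^ 2)
    refine (norm_integral_le_of_norm_le ig (Filter.Eventually.of_forall fun y => ?_)).trans ?_
    · rw [norm_mul, Real.norm_of_nonneg (by positivity : 0 ≤ ‖u x‖ ^ 2)]
      gcongr
      rw [norm_mul, Real.norm_of_nonneg (by positivity : 0 ≤ ‖u y‖ ^ 2), Real.norm_eq_abs]
      simp only [Pi.add_apply]
      rw [← sq_abs (V (x - y))]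
      generalize |V (x - y)| = z
      generalize ‖u y‖ = t
      have e : K / 2 * z ^ 2 + 1 / (2 * K) * t ^ 4 - z * t ^ 2 = (K * z - t ^ 2) ^ 2 / (2 * K) := by
        field_simp; ring
      have : 0 ≤ (K * z - t ^ 2) ^ 2 / (2 * K) := by positivity
      linarith
    · rw [integral_mul_const]
      gcongr
      simp only [Pi.add_apply]
      rw [integral_add (iVx.const_mul (K / 2)) (i4.const_mul (1 / (2 * K))), integral_const_mul,
        integral_const_mul, integral_sub_left_eq_self (fun y => V y ^ 2) volume x, ← hN]
      have : 1 / (2 * K) * ∫ y, ‖u y‖ ^ 4 ≤ (1 + K) / 2 := by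
        rw [one_div, inv_mul_le_iff₀ (by positivity)]
        calc _ ≤ K + K ^ 2 := b4
          _ = _ := by ring
      nlinarith
  have := norm_integral_le_of_norm_le (iu.const_mul (K * (N + 1)))
    (Filter.Eventually.of_forall inner)
  rwa [integral_const_mul, h1, mul_one] at this

lemma V_unique (V W : E3 → ℝ) (hV : MemLp V 2 volume) (hW : MemLp W 2 volume)
    (h : ∀ φ : SchwartzMap E3 ℂ,
      (∫ x, ((V x : ℝ) : ℂ) *
            ∫ k, Complex.exp (-(Complex.I * ((inner ℝ k x : ℝ) : ℂ))) * φ k) =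
      (∫ x, ((W x : ℝ) : ℂ) *
            ∫ k, Complex.exp (-(Complex.I * ((inner ℝ k x : ℝ) : ℂ))) * φ k)) :
    V =ᵐ[volume] W := by
  have hd : MemLp (fun x => V x - W x) 2 volume := hV.sub hW
  have := ae_eq_zero_of_integral_contDiff_smul_eq_zero (f := fun x => V x - W x)
    (hd.locallyIntegrable (by norm_num)) (μ := volume) ?_
  · filter_upwards [this] with x hx
    linarith
  intro g hg hgc
  have hg2 : MemLp g 2 volume := hg.continuous.memLp_of_hasCompactSupport hgc
  let ψ0 : E3 → ℂ := fun y => ((g ((2 * Real.pi) • y) : ℝ) : ℂ)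
  have c1 : HasCompactSupport ψ0 :=
    (hgc.comp_smul (by positivity : (2 * Real.pi) ≠ 0)).comp_left (g := fun r : ℝ => (r : ℂ)) rfl
  have c2 : ContDiff ℝ (⊤ : ℕ∞) ψ0 :=
    Complex.ofRealCLM.contDiff.comp (hg.comp (contDiff_const_smul (2 * Real.pi)))
  let ψ : SchwartzMap E3 ℂ := c1.toSchwartzMap c2
  let φ : SchwartzMap E3 ℂ := FourierTransformInv.fourierInv ψ
  have key : ∀ x, ∫ k, Complex.exp (-(Complex.I * ((inner ℝ k x : ℝ) : ℂ))) * φ k = (g x : ℂ) := by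
    intro x
    have e1 : FourierTransform.fourier φ = ψ := FourierTransform.fourier_fourierInv_eq ψ
    have e2 : (FourierTransform.fourier φ) ((2 * Real.pi)⁻¹ • x) = ψ ((2 * Real.pi)⁻¹ • x) := by
      rw [e1]
    rw [SchwartzMap.fourier_coe, Real.fourier_eq'] at e2
    have e3 : ψ ((2 * Real.pi)⁻¹ • x) = (g x : ℂ) := by
      change ψ0 _ = _
      simp only [ψ0]
      rw [smul_smul, mul_inv_cancel₀ (by positivity), one_smul]
    rw [← e3, ← e2]
    congr 1
    funext k
    rw [smul_eq_mul, inner_smul_right]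
    congr 2
    push_cast
    have : (Real.pi : ℂ) ≠ 0 := by exact_mod_cast Real.pi_ne_zero
    field_simp
  have hh := h φ
  simp only [key] at hh
  have hVg : Integrable (fun x => V x * g x) := hV.integrable_mul hg2
  have hWg : Integrable (fun x => W x * g x) := hW.integrable_mul hg2
  have hr : ∫ x, V x * g x = ∫ x, W x * g x := by
    simp only [← Complex.ofReal_mul] at hh
    rw [integral_complex_ofReal, integral_complex_ofReal] at hh
    exact_mod_cast hh
  simp only [smul_eq_mul]
  have : ∀ x, g x * (V x - W x) = V x * g x - W x * g x := fun x => by ring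
  simp only [this]
  rw [integral_sub hVg hWg, hr, sub_self]

lemma mu_aux (s : ℝ) (hs : 0 < s) (N : ℝ) (hN : 0 ≤ N) :
    ∃ C > 0, ∀ V : E3 → ℝ, MemLp V 2 volume → (∫ x, V x ^ 2) = N →
      ∀ (u α : E3 → ℂ),
        Differentiable ℝ u → MemLp u 2 volume →
        MemLp (fun x => fderiv ℝ u x) 2 volume →
        (∫ x, ‖u x‖ ^ 2) = 1 →
        Measurable α →
        (∫⁻ k, ENNReal.ofReal (ω k ^ (2 * s) * ‖α k‖ ^ 2) < ⊤) →
        |μshift V u α| ≤ C * H1norm u ^ 2 * (1 + hsNorm s α) ^ 2 := by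
  set c := ((∫ k : E3, (1 + ‖k‖ ^ 2) ^ (-(3 + 2 * s) / 2)) + 1) / 2 with hc
  have c0 : 0 < c := by
    have : 0 ≤ ∫ k : E3, (1 + ‖k‖ ^ 2) ^ (-(3 + 2 * s) / 2) := integral_nonneg fun k => by positivity
    positivity
  refine ⟨16 * (N + 1) + 3 * c + 12 * c ^ 2, by positivity, ?_⟩
  intro V hV hVN u α hu hu2 hd2 h1 hα hfin
  obtain ⟨iM, bM⟩ := M_bound s hs α hα hfin
  rw [← hc] at bM
  have hH : 1 ≤ H1sq u := by
    rw [H1sq, h1]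
    have : 0 ≤ ∫ x, ‖fderiv ℝ u x‖ ^ 2 := integral_nonneg fun x => by positivity
    linarith
  have t1 := V_bound V hV u hu hu2 hd2 h1 hH
  rw [hVN] at t1
  have t2 := pair_bound α (fu u) iM _ (fu_bound u hu2 hd2)
  have t3 := pair_bound α (gualpha u α) iM _ (g_bound u α hu2 h1 iM)
  have M0 : 0 ≤ ∫ k, ‖k‖ * B0 k * ‖α k‖ := integral_nonneg fun k => by
    have := B0_nonneg k
    positivity
  have a0 : 0 ≤ hsNorm s α := Real.sqrt_nonneg _
  have e : H1norm u ^ 2 = H1sq u := Real.sq_sqrt (by linarith)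
  rw [e]
  unfold μshift
  generalize (∫ k, ‖k‖ * B0 k * ‖α k‖) = M at *
  generalize hsNorm s α = a at *
  generalize H1sq u = H at *
  have s1 := abs_add_le ((1 / 2) * (∫ x, ∫ y, V (x - y) * ‖u y‖ ^ 2 * ‖u x‖ ^ 2) +
    (∫ k, (starRingEnd ℂ) (α k) * fu u k).re) (∫ k, (starRingEnd ℂ) (α k) * gualpha u α k).re
  have s2 := abs_add_le ((1 / 2) * (∫ x, ∫ y, V (x - y) * ‖u y‖ ^ 2 * ‖u x‖ ^ 2))
    (∫ k, (starRingEnd ℂ) (α k) * fu u k).re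
  rw [abs_mul, abs_of_pos (by norm_num : (0:ℝ) < 1 / 2)] at s2
  have q1 : 1 ≤ (1 + a) ^ 2 := by nlinarith
  have q2 : 1 + a ≤ (1 + a) ^ 2 := by nlinarith
  have H0 : 0 ≤ H := by linarith
  have r1 : 16 * H * (N + 1) ≤ 16 * (N + 1) * H * (1 + a) ^ 2 := by
    calc 16 * H * (N + 1) = 16 * (N + 1) * H * 1 := by ring
      _ ≤ _ := by gcongr
  have r2 : 3 * H * M ≤ 3 * c * H * (1 + a) ^ 2 := by
    calc 3 * H * M ≤ 3 * H * (c * (1 + a) ^ 2) := by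
          gcongr
          exact bM.trans (by gcongr)
      _ = _ := by ring
  have r3 : 12 * M * M ≤ 12 * c ^ 2 * H * (1 + a) ^ 2 := by
    calc 12 * M * M ≤ 12 * (c * (1 + a)) * (c * (1 + a)) := by gcongr
      _ = 12 * c ^ 2 * 1 * (1 + a) ^ 2 := by ring
      _ ≤ _ := by gcongr
  calc _ ≤ 16 * H * (N + 1) + 3 * H * M + 12 * M * M := by linarith
    _ ≤ _ := by linarith

/-- For every `s > 0` there is `C > 0` such that for the effective pair potential `V`
(the real `V ∈ L²` with unnormalized Fourier transform `v`), and for every differentiable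
`u` with `∇u ∈ L²`, `‖u‖_{L²} = 1`, and every `α` with `‖α‖_{h_s} < ∞`,
`|μ_{u,α}| ≤ C‖u‖_{H¹}²(1+‖α‖_{h_s})²`. -/
theorem mu_bound (s : ℝ) (hs : 0 < s) :
    ∃ C > 0, ∀ V : EuclideanSpace ℝ (Fin 3) → ℝ, MemLp V 2 volume →
      (∀ φ : SchwartzMap (EuclideanSpace ℝ (Fin 3)) ℂ,
        (∫ x, ((V x : ℝ) : ℂ) *
            ∫ k, Complex.exp (-(Complex.I * ((inner ℝ k x : ℝ) : ℂ))) * φ k) =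
          ∫ k, ((vker k : ℝ) : ℂ) * φ k) →
      ∀ (u α : EuclideanSpace ℝ (Fin 3) → ℂ),
        Differentiable ℝ u → MemLp u 2 volume →
        MemLp (fun x => fderiv ℝ u x) 2 volume →
        (∫ x, ‖u x‖ ^ 2) = 1 →
        Measurable α →
        (∫⁻ k, ENNReal.ofReal (ω k ^ (2 * s) * ‖α k‖ ^ 2) < ⊤) →
        |μshift V u α| ≤ C * H1norm u ^ 2 * (1 + hsNorm s α) ^ 2 := by
  by_cases hex : ∃ W : E3 → ℝ, MemLp W 2 volume ∧
      ∀ φ : SchwartzMap E3 ℂ,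
        (∫ x, ((W x : ℝ) : ℂ) *
            ∫ k, Complex.exp (-(Complex.I * ((inner ℝ k x : ℝ) : ℂ))) * φ k) =
          ∫ k, ((vker k : ℝ) : ℂ) * φ k
  · obtain ⟨W, hW, hWφ⟩ := hex
    obtain ⟨C, hC, h⟩ := mu_aux s hs (∫ x, W x ^ 2) (integral_nonneg fun x => by positivity)
    refine ⟨C, hC, fun V hV hVφ => h V hV ?_⟩
    have e := V_unique V W hV hW fun φ => (hVφ φ).trans (hWφ φ).symm
    exact integral_congr_ae (e.mono fun x hx => by simp only [hx])
  · exact ⟨1, one_pos, fun V hV hVφ => (hex ⟨V, hV, hVφ⟩).elim⟩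

end
end

section
/- Let u ∈ L²(ℝ³;ℂ) with ‖u‖_{L²} = 1 and α ∈ L²(ℝ³;ℂ). Define φ̃_α(x) = 2 Im ∫_{ℝ³} B₀(k) e^{ik·x} α(k) dk, τ_{u,α}(x) = φ̃_α(x) − (1/2)∫_{ℝ³} φ̃_α(y)|u(y)|² dy, ŵ(k) = ∫_{ℝ³} e^{−ik·y}|u(y)|² dy, and for θ ∈ ℝ set u^θ(x) = e^{−iθτ_{u,α}(x)} u(x) and α^θ(k) = α(k) + θ·(2π)^{−3/2}·B₀(k)·ŵ(k). Then: (i) |u^θ(x)| = |u(x)| for all θ and x, so ∫ e^{−ik·y}|u^θ(y)|² dy = ŵ(k); (ii) for every θ ∈ ℝ and x ∈ ℝ³, the integral ∫_{ℝ³} B₀(k)² e^{ik·x} ŵ(k) dk is real, hence φ̃_{α^θ} = φ̃_α and τ_{u^θ,α^θ} = τ_{u,α}; (iii) for every x and k the maps θ ↦ u^θ(x) and θ ↦ α^θ(k) are differentiable with i·(d/dθ)u^θ(x) = τ_{u^θ,α^θ}(x)·u^θ(x) and (d/dθ)α^θ(k) = (2π)^{−3/2} B₀(k) ∫ e^{−ik·y}|u^θ(y)|²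 dy. Hence (u^θ, α^θ) solves the mean-field dressing equations with initial datum (u,α). -/
open MeasureTheory
open scoped ENNReal

noncomputable section

/-- `φ̃_α(x) = 2 Im ∫ B₀(k) e^{ik·x} α(k) dk`. -/
def phitilde (α : EuclideanSpace ℝ (Fin 3) → ℂ) (x : EuclideanSpace ℝ (Fin 3)) : ℝ :=
  2 * (∫ k, ((B0 k : ℝ) : ℂ) * Complex.exp (Complex.I * ((inner ℝ k x : ℝ) : ℂ)) * α k).im

/-- `τ_{u,α}(x) = φ̃_α(x) − ½⟨u, φ̃_α u⟩`. -/
def tau (u α : EuclideanSpace ℝ (Fin 3) → ℂ) (x : EuclideanSpace ℝ (Fin 3)) : ℝ :=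
  phitilde α x - (1 / 2) * ∫ y, phitilde α y * ‖u y‖ ^ 2

/-- `ŵ(k) = ∫ e^{−ik·y}|u(y)|² dy`. -/
def what (u : EuclideanSpace ℝ (Fin 3) → ℂ) (k : EuclideanSpace ℝ (Fin 3)) : ℂ :=
  ∫ y, Complex.exp (-(Complex.I * ((inner ℝ k y : ℝ) : ℂ))) * ((‖u y‖ ^ 2 : ℝ) : ℂ)

/-- The particle component of the mean-field dressing flow,
`u^θ(x) = e^{−iθτ_{u,α}(x)} u(x)`. -/
def uθ (u α : EuclideanSpace ℝ (Fin 3) → ℂ) (θ : ℝ) (x : EuclideanSpace ℝ (Fin 3)) : ℂ :=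
  Complex.exp (-(Complex.I * (θ : ℂ) * ((tau u α x : ℝ) : ℂ))) * u x

/-- The field component of the mean-field dressing flow,
`α^θ(k) = α(k) + θ·(2π)^{−3/2}·B₀(k)·ŵ(k)`. -/
def αθ (u α : EuclideanSpace ℝ (Fin 3) → ℂ) (θ : ℝ) (k : EuclideanSpace ℝ (Fin 3)) : ℂ :=
  α k + (θ : ℂ) * (((2 * Real.pi) ^ (-(3 : ℝ) / 2) : ℝ) : ℂ) * ((B0 k : ℝ) : ℂ) * what u k

lemma omega_one_le (k : EuclideanSpace ℝ (Fin 3)) : 1 ≤ ω k := by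
  unfold ω
  rw [Real.one_le_sqrt]
  nlinarith [sq_nonneg ‖k‖]

lemma B0_neg (k : EuclideanSpace ℝ (Fin 3)) : B0 (-k) = B0 k := by
  simp [B0, ω]

lemma B0_cont : Continuous B0 := by
  have hω : Continuous ω := by unfold ω; fun_prop
  unfold B0
  refine Continuous.div continuous_const (by fun_prop) fun k => ?_
  have h := omega_one_le k
  have h2 : 0 < Real.sqrt (ω k) := Real.sqrt_pos.2 (by linarith)
  have h3 : 0 < ‖k‖ ^ 2 + ω k := by positivity
  positivity

lemma B0_sq_le (k : EuclideanSpace ℝ (Fin 3)) :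
    B0 k ^ 2 ≤ (1 + ‖k‖ ^ 2) ^ (-(4 : ℝ) / 2) := by
  have h := omega_one_le k
  have e : (1 + ‖k‖ ^ 2) ^ (-(4 : ℝ) / 2) = 1 / (1 + ‖k‖ ^ 2) ^ 2 := by
    rw [show -(4 : ℝ) / 2 = -((2 : ℕ) : ℝ) by norm_num, Real.rpow_neg (by positivity),
      Real.rpow_natCast, one_div]
  rw [e]
  unfold B0
  rw [div_pow, one_pow, mul_pow, Real.sq_sqrt (by linarith)]
  have h1 : (1 + ‖k‖ ^ 2) ^ 2 ≤ (‖k‖ ^ 2 + ω k) ^ 2 := by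
    gcongr ?_ ^ 2
    linarith
  apply one_div_le_one_div_of_le (by positivity)
  nlinarith [sq_nonneg (‖k‖ ^ 2 + ω k)]

lemma B0_sq_int : Integrable (fun k => B0 k ^ 2) := by
  have := integrable_rpow_neg_one_add_norm_sq (E := EuclideanSpace ℝ (Fin 3)) (μ := volume)
    (r := 4) (by simp; norm_num)
  refine this.mono' (by have := B0_cont; fun_prop) (Filter.Eventually.of_forall fun k => ?_)
  rw [Real.norm_of_nonneg (sq_nonneg _)]
  exact B0_sq_le k

lemma norm_sq_int (u : EuclideanSpace ℝ (Fin 3) → ℂ) (hu : MemLp u 2 volume) :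
    Integrable (fun y => ‖u y‖ ^ 2) := hu.integrable_norm_pow (by norm_num)

lemma what_norm_le (u : EuclideanSpace ℝ (Fin 3) → ℂ) (k : EuclideanSpace ℝ (Fin 3)) :
    ‖what u k‖ ≤ ∫ y, ‖u y‖ ^ 2 := by
  unfold what
  refine (norm_integral_le_integral_norm _).trans (le_of_eq ?_)
  congr 1
  ext y
  simp [Complex.norm_exp]

lemma what_cont (u : EuclideanSpace ℝ (Fin 3) → ℂ) (hu : MemLp u 2 volume) :
    Continuous (what u) := by
  unfold what
  refine continuous_of_dominated (bound := fun y => ‖u y‖ ^ 2) (fun k => ?_) (fun k => ?_)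
    (norm_sq_int u hu) (Filter.Eventually.of_forall fun y => ?_)
  · refine AEStronglyMeasurable.mul (Continuous.aestronglyMeasurable (by fun_prop)) ?_
    exact Complex.continuous_ofReal.comp_aestronglyMeasurable (norm_sq_int u hu).1
  · refine Filter.Eventually.of_forall fun y => ?_
    simp [Complex.norm_exp]
  · fun_prop

lemma what_neg (u : EuclideanSpace ℝ (Fin 3) → ℂ) (k : EuclideanSpace ℝ (Fin 3)) :
    what u (-k) = (starRingEnd ℂ) (what u k) := by
  unfold what
  rw [← integral_conj]
  congr 1
  ext y
  simp only [map_mul, ← Complex.exp_conj, map_neg, Complex.conj_I, Complex.conj_ofReal,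
    inner_neg_left]
  congr 2
  push_cast
  ring

lemma int_real (u : EuclideanSpace ℝ (Fin 3) → ℂ) (x : EuclideanSpace ℝ (Fin 3)) :
    (∫ k, ((B0 k ^ 2 : ℝ) : ℂ) *
          Complex.exp (Complex.I * ((inner ℝ k x : ℝ) : ℂ)) * what u k).im = 0 := by
  rw [← Complex.conj_eq_iff_im, ← integral_conj, ← integral_neg_eq_self]
  congr 1
  ext k
  simp only [map_mul, ← Complex.exp_conj, Complex.conj_I, Complex.conj_ofReal,
    inner_neg_left, what_neg, B0_neg, Complex.conj_conj]
  congr 3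
  push_cast
  ring

lemma int_integrable (u : EuclideanSpace ℝ (Fin 3) → ℂ) (hu : MemLp u 2 volume)
    (x : EuclideanSpace ℝ (Fin 3)) :
    Integrable (fun k => ((B0 k ^ 2 : ℝ) : ℂ) *
          Complex.exp (Complex.I * ((inner ℝ k x : ℝ) : ℂ)) * what u k) := by
  have h1 := B0_cont
  have h2 := what_cont u hu
  refine (B0_sq_int.mul_const (∫ y, ‖u y‖ ^ 2)).mono'
    (Continuous.aestronglyMeasurable (by fun_prop)) (Filter.Eventually.of_forall fun k => ?_)
  have : ‖((B0 k ^ 2 : ℝ) : ℂ) *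
          Complex.exp (Complex.I * ((inner ℝ k x : ℝ) : ℂ)) * what u k‖ = B0 k ^ 2 * ‖what u k‖ := by
    simp [Complex.norm_exp]
  rw [this]
  exact mul_le_mul_of_nonneg_left (what_norm_le u k) (sq_nonneg _)

lemma phi_eq (u α : EuclideanSpace ℝ (Fin 3) → ℂ) (hu : MemLp u 2 volume) (θ : ℝ)
    (x : EuclideanSpace ℝ (Fin 3)) : phitilde (αθ u α θ) x = phitilde α x := by
  unfold phitilde
  congr 1
  set c : ℝ := θ * (2 * Real.pi) ^ (-(3 : ℝ) / 2) with hc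
  set g : EuclideanSpace ℝ (Fin 3) → ℂ := fun k => ((B0 k ^ 2 : ℝ) : ℂ) *
          Complex.exp (Complex.I * ((inner ℝ k x : ℝ) : ℂ)) * what u k with hg
  set f : EuclideanSpace ℝ (Fin 3) → ℂ := fun k =>
    ((B0 k : ℝ) : ℂ) * Complex.exp (Complex.I * ((inner ℝ k x : ℝ) : ℂ)) * α k with hf
  have hgi : Integrable (fun k => (c : ℂ) * g k) := (int_integrable u hu x).const_mul _
  have e : (fun k => ((B0 k : ℝ) : ℂ) * Complex.exp (Complex.I * ((inner ℝ k x : ℝ) : ℂ)) *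
      αθ u α θ k) = fun k => f k + (c : ℂ) * g k := by
    ext k
    simp only [hf, hg, hc, αθ]
    push_cast
    ring
  rw [e]
  by_cases hfi : Integrable f
  · rw [integral_add hfi hgi, integral_const_mul, Complex.add_im, Complex.im_ofReal_mul,
      int_real u x]
    simp
  · rw [integral_undef hfi, integral_undef]
    intro h
    apply hfi
    refine (h.sub hgi).congr (Filter.Eventually.of_forall fun k => ?_)
    simp

lemma norm_uθ (u α : EuclideanSpace ℝ (Fin 3) → ℂ) (θ : ℝ) (x : EuclideanSpace ℝ (Fin 3)) :
    ‖uθ u α θ x‖ = ‖u x‖ := by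
  simp [uθ, Complex.norm_exp]

lemma what_uθ (u α : EuclideanSpace ℝ (Fin 3) → ℂ) (θ : ℝ) (k : EuclideanSpace ℝ (Fin 3)) :
    what (uθ u α θ) k = what u k := by
  simp only [what, norm_uθ]

lemma tau_uθ (u α : EuclideanSpace ℝ (Fin 3) → ℂ) (hu : MemLp u 2 volume) (θ : ℝ)
    (x : EuclideanSpace ℝ (Fin 3)) : tau (uθ u α θ) (αθ u α θ) x = tau u α x := by
  simp only [tau, norm_uθ, phi_eq u α hu]

/-- `(u^θ, α^θ)` solves the mean-field dressing equations with initial datum `(u,α)`: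
(i) `|u^θ| = |u|` and `ŵ` is unchanged along the flow;
(ii) `∫ B₀(k)² e^{ik·x} ŵ(k) dk` is real, hence `φ̃_{α^θ} = φ̃_α` and `τ_{u^θ,α^θ} = τ_{u,α}`;
(iii) `i ∂_θ u^θ = τ_{u^θ,α^θ} u^θ` and `∂_θ α^θ(k) = (2π)^{−3/2} B₀(k) ∫ e^{−ik·y}|u^θ(y)|² dy`. -/
theorem dressing_flow_explicit (u α : EuclideanSpace ℝ (Fin 3) → ℂ)
    (hu : MemLp u 2 volume) (hu1 : (∫ x, ‖u x‖ ^ 2) = 1)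
    (hα : MemLp α 2 volume) :
    -- (i)
    ((∀ θ x, ‖uθ u α θ x‖ = ‖u x‖) ∧
      ∀ θ k, what (uθ u α θ) k = what u k) ∧
    -- (ii)
    ((∀ x : EuclideanSpace ℝ (Fin 3),
        (∫ k, ((B0 k ^ 2 : ℝ) : ℂ) *
          Complex.exp (Complex.I * ((inner ℝ k x : ℝ) : ℂ)) * what u k).im = 0) ∧
      (∀ θ x, phitilde (αθ u α θ) x = phitilde α x) ∧
      ∀ θ x, tau (uθ u α θ) (αθ u α θ) x = tau u α x) ∧
    -- (iii)
    ((∀ (θ : ℝ) (x : EuclideanSpace ℝ (Fin 3)),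
        HasDerivAt (fun ϑ : ℝ => uθ u α ϑ x)
          (-Complex.I * ((tau (uθ u α θ) (αθ u α θ) x : ℝ) : ℂ) * uθ u α θ x) θ) ∧
      ∀ (θ : ℝ) (k : EuclideanSpace ℝ (Fin 3)),
        HasDerivAt (fun ϑ : ℝ => αθ u α ϑ k)
          ((((2 * Real.pi) ^ (-(3 : ℝ) / 2) * B0 k : ℝ) : ℂ) * what (uθ u α θ) k) θ) := by
  refine ⟨⟨norm_uθ u α, what_uθ u α⟩, ⟨int_real u, phi_eq u α hu, tau_uθ u α hu⟩, ?_, ?_⟩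
  · intro θ x
    rw [tau_uθ u α hu]
    unfold uθ
    have h : HasDerivAt (fun ϑ : ℝ => -(Complex.I * (ϑ : ℂ) * ((tau u α x : ℝ) : ℂ)))
        (-(Complex.I * 1 * ((tau u α x : ℝ) : ℂ))) θ :=
      (((HasDerivAt.ofReal_comp (hasDerivAt_id θ)).const_mul Complex.I).mul_const _).neg
    refine (h.cexp.mul_const (u x)).congr_deriv ?_
    ring
  · intro θ k
    rw [what_uθ]
    unfold αθ
    have h : HasDerivAt (fun ϑ : ℝ => (ϑ : ℂ)) 1 θ := HasDerivAt.ofReal_comp (hasDerivAt_id θ)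
    refine ((((h.mul_const (((2 * Real.pi) ^ (-(3 : ℝ) / 2) : ℝ) : ℂ)).mul_const
      ((B0 k : ℝ) : ℂ)).mul_const (what u k)).const_add (α k)).congr_deriv ?_
    push_cast
    ring
end
end

section
/- Let u : ℝ³ → ℂ be differentiable with u, ∇u ∈ L²(ℝ³) and ‖u‖_{L²} = 1, and let α : ℝ³ → ℂ be measurable with ∫ B₀(k)|α(k)| dk < ∞ and ∫ |k|B₀(k)|α(k)| dk < ∞. Define φ̃_α(x) = 2 Im ∫ B₀(k)e^{ik·x}α(k) dk, τ_{u,α}(x) = φ̃_α(x) − (1/2)∫ φ̃_α(y)|u(y)|² dy, u^θ(x) = e^{−iθτ_{u,α}(x)}u(x), and F_α(x) = 2 Re ∫ k B₀(k) e^{ik·x} α(k) dk. Then τ_{u,α} is differentiable with ∇τ_{u,α}(x) = F_α(x); consequently u^θ is differentiable with ∇u^θ(x) = e^{−iθτ_{u,α}(x)}(∇u(x) − iθ F_α(x) u(x)), and for every s > 0 there is a constant C = C(s), independent of u, α, θ, such that ‖∇u^θ‖_{L²} ≤ ‖∇u‖_{L²} + C|θ|·‖α‖_{h_s}. -/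
open MeasureTheory
open scoped ENNReal

noncomputable section

/-- The dressed vector potential `F_α(x) = 2 Re ∫ k B₀(k) e^{ik·x} α(k) dk ∈ ℝ³`. -/
def FαVec (α : EuclideanSpace ℝ (Fin 3) → ℂ) (x : EuclideanSpace ℝ (Fin 3)) :
    EuclideanSpace ℝ (Fin 3) :=
  (WithLp.equiv 2 (Fin 3 → ℝ)).symm fun j =>
    2 * (∫ k, ((k j * B0 k : ℝ) : ℂ) *
      Complex.exp (Complex.I * ((inner ℝ k x : ℝ) : ℂ)) * α k).re

lemma omega_pos (k : E3) : 0 < ω k := Real.sqrt_pos.2 (by positivity)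

lemma B0_pos (k : E3) : 0 < B0 k := by
  have := omega_pos k
  unfold B0
  positivity

lemma omega_cont : Continuous ω := by unfold ω; fun_prop

lemma kB0_bound (s : ℝ) (k : E3) :
    (‖k‖ * B0 k * ω k ^ (-s)) ^ 2 ≤ (1 + ‖k‖ ^ 2) ^ (-(3 + 2 * s) / 2) := by
  have hw := omega_pos k
  have hw2 := omega_sq k
  have h1 : (1 + ‖k‖ ^ 2) ^ (-(3 + 2 * s) / 2) = (ω k ^ 3)⁻¹ * (ω k ^ (-s)) ^ 2 := by
    rw [← hw2, ← Real.rpow_natCast (ω k) 2, ← Real.rpow_mul hw.le,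
      ← Real.rpow_natCast (ω k) 3, ← Real.rpow_neg hw.le, ← Real.rpow_natCast _ 2,
      ← Real.rpow_mul hw.le, ← Real.rpow_add hw]
    congr 1
    push_cast
    ring
  rw [h1, mul_pow]
  refine mul_le_mul_of_nonneg_right ?_ (by positivity)
  have hk := norm_nonneg k
  have hle : ‖k‖ * ω k ≤ ‖k‖ ^ 2 + ω k := by
    have hkw : ‖k‖ ≤ ω k := by nlinarith
    have hkw1 : ω k ≤ 1 + ‖k‖ := by nlinarith
    nlinarith
  have hsq : (‖k‖ * ω k) ^ 2 ≤ (‖k‖ ^ 2 + ω k) ^ 2 := pow_le_pow_left₀ (by positivity) hle 2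
  unfold B0
  rw [mul_one_div, div_pow, mul_pow, Real.sq_sqrt hw.le, div_le_iff₀ (by positivity),
    inv_mul_eq_div, le_div_iff₀ (by positivity)]
  nlinarith

/-- The constant. -/
def Kc (s : ℝ) : ℝ≥0∞ := (∫⁻ k : E3, ENNReal.ofReal (‖k‖ * B0 k * ω k ^ (-s)) ^ (2:ℝ)) ^ (1 / 2 : ℝ)

lemma Kc_lt_top (s : ℝ) (hs : 0 < s) : Kc s < ⊤ := by
  unfold Kc
  refine ENNReal.rpow_lt_top_of_nonneg (by norm_num) ?_
  have hi : Integrable (fun k : E3 => (1 + ‖k‖ ^ 2) ^ (-(3 + 2 * s) / 2)) volume := by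
    apply integrable_rpow_neg_one_add_norm_sq
    simp
    linarith
  refine ne_of_lt (lt_of_le_of_lt (lintegral_mono fun k => ?_) hi.lintegral_lt_top)
  have hw := omega_pos k
  have := B0_pos k
  have hp : 0 ≤ ‖k‖ * B0 k * ω k ^ (-s) := by positivity
  rw [ENNReal.ofReal_rpow_of_nonneg hp (by norm_num)]
  apply ENNReal.ofReal_le_ofReal
  rw [Real.rpow_two]
  exact kB0_bound s k

lemma holder_bound (s : ℝ) (α : E3 → ℂ) (hα : Measurable α) :
    (∫⁻ k, ENNReal.ofReal (‖k‖ * B0 k * ‖α k‖)) ≤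
      Kc s * (∫⁻ k, ENNReal.ofReal (ω k ^ (2 * s) * ‖α k‖ ^ 2)) ^ (1 / 2 : ℝ) := by
  have hm1 : AEMeasurable (fun k : E3 => ENNReal.ofReal (‖k‖ * B0 k * ω k ^ (-s))) volume := by
    have := B0_cont.measurable
    have := omega_cont.measurable
    fun_prop
  have hm2 : AEMeasurable (fun k : E3 => ENNReal.ofReal (ω k ^ s * ‖α k‖)) volume := by
    have := omega_cont.measurable
    fun_prop
  have h := ENNReal.lintegral_mul_le_Lp_mul_Lq volume Real.HolderConjugate.two_two hm1 hm2
  have e1 : (∫⁻ k, ENNReal.ofReal (‖k‖ * B0 k * ‖α k‖)) = ∫⁻ k,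
      ((fun k : E3 => ENNReal.ofReal (‖k‖ * B0 k * ω k ^ (-s))) *
        (fun k : E3 => ENNReal.ofReal (ω k ^ s * ‖α k‖))) k := by
    refine lintegral_congr fun k => ?_
    have hw := omega_pos k
    have := B0_pos k
    rw [Pi.mul_apply, ← ENNReal.ofReal_mul (by positivity)]
    congr 1
    have : ω k ^ (-s) * ω k ^ s = 1 := by
      rw [← Real.rpow_add hw]; simp
    linear_combination (-(‖k‖ * B0 k * ‖α k‖)) * this
  have e2 : (∫⁻ k, ENNReal.ofReal (ω k ^ (2 * s) * ‖α k‖ ^ 2)) =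
      ∫⁻ k, ENNReal.ofReal (ω k ^ s * ‖α k‖) ^ (2:ℝ) := by
    refine lintegral_congr fun k => ?_
    have hw := omega_pos k
    rw [ENNReal.ofReal_rpow_of_nonneg (by positivity) (by norm_num), Real.rpow_two, mul_pow,
      mul_comm 2 s, Real.rpow_mul hw.le, Real.rpow_two]
  rw [e1, e2]
  exact h

/-- integrand -/
def Gf (α : E3 → ℂ) (x k : E3) : ℂ :=
  ((B0 k : ℝ) : ℂ) * Complex.exp (Complex.I * ((inner ℝ k x : ℝ) : ℂ)) * α k

/-- derivative of the integrand -/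
def Gf' (α : E3 → ℂ) (x k : E3) : E3 →L[ℝ] ℂ :=
  (Complex.I * Gf α x k) • (Complex.ofRealCLM.comp (innerSL ℝ k))

lemma norm_Gf (α : E3 → ℂ) (x k : E3) : ‖Gf α x k‖ = B0 k * ‖α k‖ := by
  unfold Gf
  rw [norm_mul, norm_mul, mul_comm Complex.I, Complex.norm_exp_ofReal_mul_I, Complex.norm_real,
    Real.norm_of_nonneg (B0_pos k).le, mul_one]

lemma Gf'_apply (α : E3 → ℂ) (x k v : E3) :
    Gf' α x k v = Complex.I * Gf α x k * ((inner ℝ k v : ℝ) : ℂ) := by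
  simp [Gf']

lemma norm_Gf'_le (α : E3 → ℂ) (x k : E3) : ‖Gf' α x k‖ ≤ ‖k‖ * B0 k * ‖α k‖ := by
  have := B0_pos k
  refine ContinuousLinearMap.opNorm_le_bound _ (by positivity) fun v => ?_
  rw [Gf'_apply, norm_mul, norm_mul, norm_Gf, Complex.norm_I, one_mul, Complex.norm_real]
  have h := norm_inner_le_norm (𝕜 := ℝ) k v
  calc B0 k * ‖α k‖ * ‖(inner ℝ k v : ℝ)‖ ≤ B0 k * ‖α k‖ * (‖k‖ * ‖v‖) := by gcongr
    _ = _ := by ring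

lemma Gf_hasFDerivAt (α : E3 → ℂ) (x k : E3) :
    HasFDerivAt (fun x => Gf α x k) (Gf' α x k) x := by
  have h1 : HasFDerivAt (fun x : E3 => ((inner ℝ k x : ℝ) : ℂ))
      (Complex.ofRealCLM.comp (innerSL ℝ k)) x :=
    (Complex.ofRealCLM.comp (innerSL ℝ k)).hasFDerivAt
  have h2 := (((h1.const_mul Complex.I).cexp.const_mul ((B0 k : ℝ) : ℂ)).mul_const (α k))
  refine h2.congr_fderiv ?_
  ext v
  rw [Gf'_apply]
  simp [Gf]
  ring

lemma Gf_meas (α : E3 → ℂ) (hα : Measurable α) (x : E3) : Measurable (Gf α x) := by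
  unfold Gf
  have := B0_cont.measurable
  fun_prop

lemma Gf'_meas (α : E3 → ℂ) (hα : Measurable α) (x : E3) :
    AEStronglyMeasurable (Gf' α x) volume := by
  unfold Gf'
  have h1 := Gf_meas α hα x
  refine AEStronglyMeasurable.smul (h1.const_mul Complex.I).aestronglyMeasurable ?_
  have : Continuous (fun k : E3 => Complex.ofRealCLM.comp (innerSL ℝ k)) := by fun_prop
  exact this.aestronglyMeasurable

lemma int_of_lint {f : E3 → ℝ} (hf : Measurable f) (h0 : ∀ k, 0 ≤ f k)
    (h : ∫⁻ k, ENNReal.ofReal (f k) < ⊤) : Integrable f volume := by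
  refine ⟨hf.aestronglyMeasurable, ?_⟩
  rw [hasFiniteIntegral_iff_ofReal (Filter.Eventually.of_forall h0)]
  exact h

section
variable {α : E3 → ℂ}

lemma bd_int (hα : Measurable α) (h2 : ∫⁻ k, ENNReal.ofReal (‖k‖ * B0 k * ‖α k‖) < ⊤) :
    Integrable (fun k => ‖k‖ * B0 k * ‖α k‖) volume := by
  have := B0_cont.measurable
  refine int_of_lint (by fun_prop) (fun k => ?_) h2
  have := B0_pos k
  positivity

lemma Gf_int (hα : Measurable α) (h1 : ∫⁻ k, ENNReal.ofReal (B0 k * ‖α k‖) < ⊤) (x : E3) :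
    Integrable (Gf α x) volume := by
  have := B0_cont.measurable
  have hb : Integrable (fun k => B0 k * ‖α k‖) volume := by
    refine int_of_lint (by fun_prop) (fun k => ?_) h1
    have := B0_pos k
    positivity
  exact hb.mono' (Gf_meas α hα x).aestronglyMeasurable
    (Filter.Eventually.of_forall fun k => (norm_Gf α x k).le)

lemma Gf'_int (hα : Measurable α) (h2 : ∫⁻ k, ENNReal.ofReal (‖k‖ * B0 k * ‖α k‖) < ⊤) (x : E3) :
    Integrable (Gf' α x) volume :=
  (bd_int hα h2).mono' (Gf'_meas α hα x) (Filter.Eventually.of_forall fun k => norm_Gf'_le α x k)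

lemma intG_hasFDerivAt (hα : Measurable α)
    (h1 : ∫⁻ k, ENNReal.ofReal (B0 k * ‖α k‖) < ⊤)
    (h2 : ∫⁻ k, ENNReal.ofReal (‖k‖ * B0 k * ‖α k‖) < ⊤) (x : E3) :
    HasFDerivAt (fun x => ∫ k, Gf α x k) (∫ k, Gf' α x k) x :=
  hasFDerivAt_integral_of_dominated_of_fderiv_le (s := Set.univ)
    (bound := fun k => ‖k‖ * B0 k * ‖α k‖) Filter.univ_mem
    (Filter.Eventually.of_forall fun y => (Gf_meas α hα y).aestronglyMeasurable)
    (Gf_int hα h1 x) (Gf'_meas α hα x)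
    (Filter.Eventually.of_forall fun k y _ => norm_Gf'_le α y k)
    (bd_int hα h2)
    (Filter.Eventually.of_forall fun k y _ => Gf_hasFDerivAt α y k)

lemma inner_F (hα : Measurable α)
    (h2 : ∫⁻ k, ENNReal.ofReal (‖k‖ * B0 k * ‖α k‖) < ⊤) (x v : E3) :
    (inner ℝ (FαVec α x) v : ℝ) = 2 * ((∫ k, Gf' α x k) v).im := by
  have hint := Gf'_int hα h2 x
  have hcomp : ∀ j : Fin 3, (FαVec α x) j =
      2 * ((∫ k, Gf' α x k) (EuclideanSpace.single j (1:ℝ))).im := by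
    intro j
    rw [ContinuousLinearMap.integral_apply hint]
    have : (fun k => Gf' α x k (EuclideanSpace.single j (1:ℝ))) = fun k => Complex.I *
        (((k j * B0 k : ℝ) : ℂ) * Complex.exp (Complex.I * ((inner ℝ k x : ℝ) : ℂ)) * α k) := by
      funext k
      rw [Gf'_apply, EuclideanSpace.inner_single_right]
      simp [Gf]
      ring
    rw [this, integral_const_mul]
    simp [FαVec]
  have hv : v = ∑ j, v j • EuclideanSpace.single j (1:ℝ) := by
    ext i
    fin_cases i <;> simp [Fin.sum_univ_three]
  conv_rhs => rw [hv]
  rw [PiLp.inner_apply]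
  simp only [Fin.sum_univ_three, hcomp]
  simp
  ring

lemma tau_hasFDerivAt (u : E3 → ℂ) (hα : Measurable α)
    (h1 : ∫⁻ k, ENNReal.ofReal (B0 k * ‖α k‖) < ⊤)
    (h2 : ∫⁻ k, ENNReal.ofReal (‖k‖ * B0 k * ‖α k‖) < ⊤) (x : E3) :
    HasFDerivAt (tau u α) (innerSL ℝ (FαVec α x)) x := by
  have h := (((Complex.imCLM.hasFDerivAt.comp x (intG_hasFDerivAt hα h1 h2 x)).const_mul 2).sub_const
    ((1 / 2) * ∫ y, phitilde α y * ‖u y‖ ^ 2))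
  refine (h.congr_fderiv ?_)
  ext v
  rw [innerSL_apply_apply, inner_F hα h2]
  simp

lemma norm_F_le (hα : Measurable α)
    (h2 : ∫⁻ k, ENNReal.ofReal (‖k‖ * B0 k * ‖α k‖) < ⊤) (x : E3) :
    ‖FαVec α x‖ ≤ 2 * ∫ k, ‖k‖ * B0 k * ‖α k‖ := by
  rw [← innerSL_apply_norm (𝕜 := ℝ)]
  have hn : ‖∫ k, Gf' α x k‖ ≤ ∫ k, ‖k‖ * B0 k * ‖α k‖ :=
    norm_integral_le_of_norm_le (bd_int hα h2)
      (Filter.Eventually.of_forall fun k => norm_Gf'_le α x k)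
  have h0 := (norm_nonneg _).trans hn
  refine ContinuousLinearMap.opNorm_le_bound _ (by positivity) fun v => ?_
  rw [innerSL_apply_apply, inner_F hα h2, norm_mul, Real.norm_ofNat, mul_assoc]
  gcongr
  exact (Complex.abs_im_le_norm _).trans (((∫ k, Gf' α x k).le_opNorm v).trans (by gcongr))

lemma utheta_hasFDerivAt {u : E3 → ℂ} (hu : Differentiable ℝ u) (hα : Measurable α)
    (h1 : ∫⁻ k, ENNReal.ofReal (B0 k * ‖α k‖) < ⊤)
    (h2 : ∫⁻ k, ENNReal.ofReal (‖k‖ * B0 k * ‖α k‖) < ⊤) (θ : ℝ) (x : E3) :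
    ∃ L : E3 →L[ℝ] ℂ, HasFDerivAt (uθ u α θ) L x ∧ ∀ v, L v =
      Complex.exp (-(Complex.I * (θ : ℂ) * ((tau u α x : ℝ) : ℂ))) *
            (fderiv ℝ u x v -
              Complex.I * (θ : ℂ) * ((inner ℝ (FαVec α x) v : ℝ) : ℂ) * u x) := by
  have ht : HasFDerivAt (fun y => ((tau u α y : ℝ) : ℂ)) _ x :=
    Complex.ofRealCLM.hasFDerivAt.comp x (tau_hasFDerivAt u hα h1 h2 x)
  have h := (ht.const_mul (Complex.I * (θ : ℂ))).fun_neg.cexp.mul (hu x).hasFDerivAt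
  refine ⟨_, h, fun v => ?_⟩
  simp
  ring

lemma norm_utheta_le {u : E3 → ℂ} (hu : Differentiable ℝ u) (hα : Measurable α)
    (h1 : ∫⁻ k, ENNReal.ofReal (B0 k * ‖α k‖) < ⊤)
    (h2 : ∫⁻ k, ENNReal.ofReal (‖k‖ * B0 k * ‖α k‖) < ⊤) (θ : ℝ) (x : E3) :
    ‖fderiv ℝ (uθ u α θ) x‖ ≤
      ‖fderiv ℝ u x‖ + (2 * |θ| * ∫ k, ‖k‖ * B0 k * ‖α k‖) * ‖u x‖ := by
  obtain ⟨L, hL, hLv⟩ := utheta_hasFDerivAt hu hα h1 h2 θ x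
  have hF := norm_F_le hα h2 x
  have h0 := (norm_nonneg _).trans hF
  have h0' : 0 ≤ ∫ k, ‖k‖ * B0 k * ‖α k‖ := by linarith
  rw [hL.fderiv]
  refine ContinuousLinearMap.opNorm_le_bound _ (by positivity) fun v => ?_
  have he : ‖Complex.exp (-(Complex.I * (θ : ℂ) * ((tau u α x : ℝ) : ℂ)))‖ = 1 := by
    rw [show -(Complex.I * (θ : ℂ) * ((tau u α x : ℝ) : ℂ)) =
      ((-(θ * tau u α x) : ℝ) : ℂ) * Complex.I by push_cast; ring]
    exact Complex.norm_exp_ofReal_mul_I _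
  rw [hLv, norm_mul, he, one_mul]
  refine (norm_sub_le _ _).trans ?_
  rw [add_mul]
  refine add_le_add ((fderiv ℝ u x).le_opNorm v) ?_
  rw [norm_mul, norm_mul, norm_mul, Complex.norm_I, one_mul, Complex.norm_real, Complex.norm_real,
    Real.norm_eq_abs θ]
  have hi := norm_inner_le_norm (𝕜 := ℝ) (FαVec α x) v
  calc |θ| * ‖(inner ℝ (FαVec α x) v : ℝ)‖ * ‖u x‖
      ≤ |θ| * ((2 * ∫ k, ‖k‖ * B0 k * ‖α k‖) * ‖v‖) * ‖u x‖ := by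
        gcongr
        exact hi.trans (by gcongr)
    _ = _ := by ring

end

lemma lint_sq (f : E3 → ℝ) (h0 : ∀ x, 0 ≤ f x) :
    ∫⁻ x, ENNReal.ofReal (f x ^ 2) = ∫⁻ x, ENNReal.ofReal (f x) ^ (2:ℝ) := by
  refine lintegral_congr fun x => ?_
  rw [ENNReal.ofReal_rpow_of_nonneg (h0 x) (by norm_num), Real.rpow_two]

/-- For differentiable `u` with `u, ∇u ∈ L²`, `‖u‖_{L²} = 1`, and `α` with
`∫ B₀|α| < ∞`, `∫ |k|B₀|α| < ∞`: `τ_{u,α}` is differentiable with `∇τ_{u,α} = F_α`;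
consequently `u^θ` is differentiable with `∇u^θ = e^{−iθτ_{u,α}}(∇u − iθF_α u)`, and for
every `s > 0` there is `C = C(s) > 0`, independent of `u, α, θ`, with
`‖∇u^θ‖_{L²} ≤ ‖∇u‖_{L²} + C|θ|‖α‖_{h_s}`. -/
theorem dressing_gradient (s : ℝ) (hs : 0 < s) :
    ∃ C > 0, ∀ (u α : EuclideanSpace ℝ (Fin 3) → ℂ),
      Differentiable ℝ u → MemLp u 2 volume →
      MemLp (fun x => fderiv ℝ u x) 2 volume →
      (∫ x, ‖u x‖ ^ 2) = 1 →
      Measurable α →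
      (∫⁻ k, ENNReal.ofReal (B0 k * ‖α k‖) < ⊤) →
      (∫⁻ k, ENNReal.ofReal (‖k‖ * B0 k * ‖α k‖) < ⊤) →
      (∀ x, HasFDerivAt (tau u α) (innerSL ℝ (FαVec α x)) x) ∧
      (∀ θ : ℝ, Differentiable ℝ (uθ u α θ) ∧
        ∀ x v, fderiv ℝ (uθ u α θ) x v =
          Complex.exp (-(Complex.I * (θ : ℂ) * ((tau u α x : ℝ) : ℂ))) *
            (fderiv ℝ u x v -
              Complex.I * (θ : ℂ) * ((inner ℝ (FαVec α x) v : ℝ) : ℂ) * u x)) ∧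
      (∀ θ : ℝ,
        (∫⁻ x, ENNReal.ofReal (‖fderiv ℝ (uθ u α θ) x‖ ^ 2)) ^ (1 / 2 : ℝ) ≤
          (∫⁻ x, ENNReal.ofReal (‖fderiv ℝ u x‖ ^ 2)) ^ (1 / 2 : ℝ) +
            ENNReal.ofReal (C * |θ|) *
              (∫⁻ k, ENNReal.ofReal (ω k ^ (2 * s) * ‖α k‖ ^ 2))
                ^ (1 / 2 : ℝ)) := by
  have hK := Kc_lt_top s hs
  refine ⟨2 * (Kc s).toReal + 1, by positivity, ?_⟩
  intro u α hu hu2 hdu hnorm hα h1 h2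
  refine ⟨tau_hasFDerivAt u hα h1 h2, fun θ => ⟨fun x => ?_, fun x v => ?_⟩, fun θ => ?_⟩
  · obtain ⟨L, hL, -⟩ := utheta_hasFDerivAt hu hα h1 h2 θ x
    exact hL.differentiableAt
  · obtain ⟨L, hL, hLv⟩ := utheta_hasFDerivAt hu hα h1 h2 θ x
    rw [hL.fderiv, hLv]
  · set M : ℝ := ∫ k, ‖k‖ * B0 k * ‖α k‖ with hM
    have hM0 : 0 ≤ M := integral_nonneg fun k => by
      have := B0_pos k
      positivity
    have hMl : ENNReal.ofReal M = ∫⁻ k, ENNReal.ofReal (‖k‖ * B0 k * ‖α k‖) :=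
      ofReal_integral_eq_lintegral_ofReal (bd_int hα h2) (Filter.Eventually.of_forall fun k => by
        have := B0_pos k
        simp only [Pi.zero_apply]
        positivity)
    have hu1 : ∫⁻ x, ENNReal.ofReal (‖u x‖ ^ 2) = 1 := by
      rw [← ofReal_integral_eq_lintegral_ofReal hu2.norm.integrable_sq
        (Filter.Eventually.of_forall fun k => by positivity), hnorm, ENNReal.ofReal_one]
    set D : ℝ≥0∞ := ENNReal.ofReal (2 * |θ| * M) with hD
    have hmink := ENNReal.lintegral_Lp_add_le (μ := (volume : Measure E3)) (p := 2)
      (f := fun x => ENNReal.ofReal ‖fderiv ℝ u x‖)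
      (g := fun x => D * ENNReal.ofReal ‖u x‖)
      hdu.aestronglyMeasurable.norm.aemeasurable.ennreal_ofReal
      (hu2.aestronglyMeasurable.norm.aemeasurable.ennreal_ofReal.const_mul D) (by norm_num)
    have hg : (∫⁻ x, (D * ENNReal.ofReal ‖u x‖) ^ (2:ℝ)) ^ (1 / 2 : ℝ) = D := by
      simp_rw [ENNReal.mul_rpow_of_nonneg _ _ (show (0:ℝ) ≤ 2 by norm_num)]
      rw [lintegral_const_mul' _ _ (ENNReal.rpow_ne_top_of_nonneg (by norm_num)
        ENNReal.ofReal_ne_top), ← lint_sq _ (fun x => norm_nonneg (u x)), hu1, mul_one,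
        ← ENNReal.rpow_mul, show (2:ℝ) * (1 / 2) = 1 by norm_num, ENNReal.rpow_one]
    rw [hg, ← lint_sq _ (fun x => norm_nonneg (fderiv ℝ u x))] at hmink
    have hDle : D ≤ ENNReal.ofReal ((2 * (Kc s).toReal + 1) * |θ|) *
        (∫⁻ k, ENNReal.ofReal (ω k ^ (2 * s) * ‖α k‖ ^ 2)) ^ (1 / 2 : ℝ) := by
      rw [hD, ENNReal.ofReal_mul (by positivity), hMl]
      calc _ ≤ ENNReal.ofReal (2 * |θ|) * (Kc s *
            (∫⁻ k, ENNReal.ofReal (ω k ^ (2 * s) * ‖α k‖ ^ 2)) ^ (1 / 2 : ℝ)) := by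
            gcongr
            exact holder_bound s α hα
        _ = ENNReal.ofReal (2 * |θ| * (Kc s).toReal) *
            (∫⁻ k, ENNReal.ofReal (ω k ^ (2 * s) * ‖α k‖ ^ 2)) ^ (1 / 2 : ℝ) := by
            rw [ENNReal.ofReal_mul (by positivity) (q := (Kc s).toReal),
              ENNReal.ofReal_toReal hK.ne, mul_assoc]
        _ ≤ _ := by
            refine mul_le_mul' (ENNReal.ofReal_le_ofReal ?_) le_rfl
            nlinarith [abs_nonneg θ]
    refine le_trans ?_ (hmink.trans (add_le_add le_rfl hDle))
    rw [lint_sq _ (fun x => norm_nonneg (fderiv ℝ (uθ u α θ) x))]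
    refine ENNReal.rpow_le_rpow (lintegral_mono fun x => ?_) (by norm_num)
    refine ENNReal.rpow_le_rpow ?_ (by norm_num)
    rw [Pi.add_apply, hD, ← ENNReal.ofReal_mul (by positivity),
      ← ENNReal.ofReal_add (norm_nonneg _) (by positivity)]
    exact ENNReal.ofReal_le_ofReal (norm_utheta_le hu hα h1 h2 θ x)

end
end
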